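/- Let (A,b,c) be a balanced realization of a SISO impulse response g(t) = cA^{t−1}b, and suppose the Hankel matrix H(g) is strictly k-positive for some 2 ≤ k ≤ n. Then for every 1 ≤ r ≤ k−1 the balanced truncation (A₁₁, b₁, c₁) of order r satisfies: A₁₁ is symmetric, b₁ = c₁ᵀ, and A₁₁ has r distinct real eigenvalues, all contained in the open interval (0,1). -/

import Mathlib

open Matrix Polynomial

/-- The controllability matrix `[b, Ab, …, A^{n-1}b]` of a SISO pair `(A, b)`. -/
noncomputable def ctrbMatrix {n : ℕ} (A : Matrix (Fin n) (Fin n) ℝ) (b : Fin n → ℝ) :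
    Matrix (Fin n) (Fin n) ℝ :=
  Matrix.of fun i j => (A ^ (j : ℕ)).mulVec b i

/-- The observability matrix with rows `c, cA, …, cA^{n-1}` of a SISO pair `(c, A)`. -/
noncomputable def obsvMatrix {n : ℕ} (A : Matrix (Fin n) (Fin n) ℝ) (c : Fin n → ℝ) :
    Matrix (Fin n) (Fin n) ℝ :=
  Matrix.of fun i j => Matrix.vecMul c (A ^ (i : ℕ)) j

/-- `(A, b, c)` is a balanced realization with Hankel singular values `σ`. -/
def IsBalancedRealization {n : ℕ} (A : Matrix (Fin n) (Fin n) ℝ)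
    (b c : Fin n → ℝ) (σ : Fin n → ℝ) : Prop :=
  (∀ μ ∈ spectrum ℂ (A.map (Complex.ofReal ·)), ‖μ‖ < 1) ∧
  (ctrbMatrix A b).det ≠ 0 ∧
  (obsvMatrix A c).det ≠ 0 ∧
  (∀ i j : Fin n, i ≤ j → σ j ≤ σ i) ∧ (∀ i, 0 < σ i) ∧
  A * Matrix.diagonal σ * Aᵀ - Matrix.diagonal σ + Matrix.vecMulVec b b = 0 ∧
  Aᵀ * Matrix.diagonal σ * A - Matrix.diagonal σ + Matrix.vecMulVec c c = 0

/-- The square submatrix of the infinite Hankel matrix `H(g)_{i,j} = g(i+j-1)`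
(`i,j ≥ 1`) obtained from rows `ρ` and columns `c` (zero-based indexing of the
sequence: `g t` stands for `g(t+1)`). -/
def hankelSub (g : ℕ → ℝ) {p : ℕ} (ρ c : Fin p → ℕ) : Matrix (Fin p) (Fin p) ℝ :=
  Matrix.of fun i j => g (ρ i + c j)

/-- The infinite Hankel matrix `H(g)` is strictly `k`-positive. -/
def HankelStrictlyKPositive (g : ℕ → ℝ) (k : ℕ) : Prop :=
  ∀ p : ℕ, 1 ≤ p → p ≤ k → ∀ ρ c : Fin p → ℕ, StrictMono ρ → StrictMono c →
    0 < (hankelSub g ρ c).det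

/-- The Cauchy–Binet formula, with minors indexed by order embeddings. -/
theorem Matrix.det_mul_eq_sum_orderEmbedding {R α : Type*} [CommRing R] [Fintype α] [LinearOrder α]
    {p : ℕ} (M : Matrix (Fin p) α R) (N : Matrix α (Fin p) R) :
    (M * N).det =
      ∑ ρ : Fin p ↪o α, (M.submatrix id ρ).det * (N.submatrix ρ id).det := by
  classical
  have expand : (M * N).det = ∑ f : Fin p → α, (M.submatrix id f).det * ∏ i, N (f i) i := by
    simp only [det_apply', mul_apply, Finset.prod_univ_sum, Finset.mul_sum,
      Fintype.piFinset_univ, Finset.sum_mul, submatrix_apply, id]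
    rw [Finset.sum_comm]
    simp only [Finset.prod_mul_distrib, mul_assoc]
  have inj : ∑ f : Fin p → α, (M.submatrix id f).det * ∏ i, N (f i) i =
      ∑ f : Fin p → α with Function.Injective f, (M.submatrix id f).det * ∏ i, N (f i) i := by
    refine (Finset.sum_subset (Finset.filter_subset _ _) fun f _ hf => ?_).symm
    have hni : ¬Function.Injective f := by simpa using hf
    obtain ⟨i, j, hij, hne⟩ := Function.not_injective_iff.1 hni
    rw [det_zero_of_column_eq hne fun k => by simp [hij], zero_mul]
  have minor (ρ : Fin p ↪o α) : (M.submatrix id ρ).det * (N.submatrix ρ id).det =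
      ∑ τ : Equiv.Perm (Fin p), (M.submatrix id (ρ ∘ τ)).det * ∏ i, N (ρ (τ i)) i := by
    rw [det_apply' (N.submatrix ρ id), Finset.mul_sum]
    refine Finset.sum_congr rfl fun τ _ => ?_
    have := det_permute' τ (M.submatrix id ρ)
    rw [submatrix_submatrix] at this
    simp only [Function.comp_id] at this
    rw [this]
    simp only [submatrix_apply, id]
    ring
  rw [expand, inj, Finset.sum_congr rfl fun ρ _ => minor ρ, ← Finset.sum_product']
  symm
  refine Finset.sum_bij (fun x _ => x.1 ∘ x.2) ?_ ?_ ?_ fun _ _ => rfl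
  · intro x _
    simpa using x.1.injective.comp x.2.injective
  · rintro ⟨ρ, τ⟩ _ ⟨ρ', τ'⟩ _ h
    have hρ : ρ = ρ' := by
      apply OrderEmbedding.range_inj.1
      have := congrArg Set.range h
      simpa only [EquivLike.range_comp] using this
    subst hρ
    congr 1
    ext1 i
    exact ρ.injective (congrFun h i)
  · intro f hf
    have hf : Function.Injective f := by simpa using hf
    have hcard : (Finset.univ.image f).card = p := by
      rw [Finset.card_image_of_injective _ hf, Finset.card_fin]
    let ρ := (Finset.univ.image f).orderEmbOfFin hcard
    have hr : ∀ i, ∃ j, ρ j = f i := fun i => by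
      have : f i ∈ Set.range ρ := by
        simp [ρ]
      exact this
    choose τ hτ using hr
    have hτi : Function.Injective τ := fun i j hij => hf (by rw [← hτ, ← hτ, hij])
    refine ⟨(ρ, Equiv.ofBijective τ (Finite.injective_iff_bijective.1 hτi)), by simp, ?_⟩
    ext i
    exact hτ i

/-- A symmetric real matrix whose leading principal minors are positive is positive definite. -/
theorem Matrix.posDef_of_leading_minors_pos {p : ℕ} (A : Matrix (Fin p) (Fin p) ℝ)
    (hA : A.IsSymm)
    (hdet : ∀ q (hq : q ≤ p), 0 < (A.submatrix (Fin.castLE hq) (Fin.castLE hq)).det) :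
    A.PosDef := by
  induction p with
  | zero =>
    refine Matrix.PosDef.of_dotProduct_mulVec_pos (by ext i; exact i.elim0) fun x hx => ?_
    exact (hx (Subsingleton.elim _ _)).elim
  | succ p ih =>
    have hP := ih (A.submatrix Fin.castSucc Fin.castSucc) (hA.submatrix _)
      fun q hq => hdet q (hq.trans p.le_succ)
    let e : Fin p ⊕ Fin 1 ≃ Fin (p + 1) := finSumFinEquiv
    set P := A.submatrix Fin.castSucc Fin.castSucc with hPdef
    let B : Matrix (Fin p) (Fin 1) ℝ := A.submatrix Fin.castSucc (Fin.natAdd p)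
    let D : Matrix (Fin 1) (Fin 1) ℝ := A.submatrix (Fin.natAdd p) (Fin.natAdd p)
    have hblock : A.submatrix e e = fromBlocks P B Bᴴ D := by
      ext (i | i) (j | j)
      · rfl
      · rfl
      · exact hA.apply _ _
      · rfl
    have hdetA : 0 < (A.submatrix e e).det := by
      rw [det_submatrix_equiv_self]
      exact hdet (p + 1) le_rfl
    let _ : Invertible P := hP.isUnit.invertible
    have hschur : 0 < (D - Bᴴ * P⁻¹ * B) 0 0 := by
      rw [hblock, det_fromBlocks₁₁, invOf_eq_nonsing_inv, det_fin_one] at hdetA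
      exact pos_of_mul_pos_right hdetA hP.det_pos.le
    have hherm : (D - Bᴴ * P⁻¹ * B).IsHermitian := by
      ext i j
      fin_cases i; fin_cases j
      rfl
    have hpsd : (fromBlocks P B Bᴴ D).PosSemidef := by
      rw [PosDef.fromBlocks₁₁ B D hP]
      refine .of_dotProduct_mulVec_nonneg hherm fun x => ?_
      simp only [dotProduct, mulVec, Finset.univ_unique, Fin.default_eq_zero,
        Finset.sum_singleton, Pi.star_apply, star_trivial]
      nlinarith [mul_nonneg hschur.le (mul_self_nonneg (x 0))]
    rw [← hblock, posSemidef_submatrix_equiv] at hpsd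
    rw [det_submatrix_equiv_self] at hdetA
    exact hpsd.posDef_iff_det_ne_zero.2 hdetA.ne'

section PerronFrobenius

variable {ι m : Type*} [Fintype m] [DecidableEq m]

theorem tendsto_sum_dotProduct_mul {ξ : ι → m → ℝ} {F : ℕ → Finset ι} {γ : m → ℝ}
    (hlim : ∀ I I', Filter.Tendsto (fun N => ∑ ρ ∈ F N, ξ ρ I * ξ ρ I') Filter.atTop
      (nhds (if I = I' then γ I else 0))) (u v : m → ℝ) :
    Filter.Tendsto (fun N => ∑ ρ ∈ F N, (ξ ρ ⬝ᵥ u) * (ξ ρ ⬝ᵥ v)) Filter.atTop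
      (nhds (∑ I, γ I * (u I * v I))) := by
  have key : Filter.Tendsto (fun N => ∑ I, ∑ I', (u I * v I') * ∑ ρ ∈ F N, ξ ρ I * ξ ρ I')
      Filter.atTop (nhds (∑ I, ∑ I', (u I * v I') * (if I = I' then γ I else 0))) :=
    tendsto_finsetSum _ fun I _ => tendsto_finsetSum _ fun I' _ => (hlim I I').const_mul _
  convert key using 1
  · ext N
    simp_rw [dotProduct, Finset.sum_mul_sum, Finset.mul_sum]
    rw [Finset.sum_comm]
    refine Finset.sum_congr rfl fun I _ => ?_
    rw [Finset.sum_comm]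
    exact Finset.sum_congr rfl fun I' _ => Finset.sum_congr rfl fun ρ _ => by ring
  · congr 1
    refine Finset.sum_congr rfl fun I _ => ?_
    simp [mul_comm]

/-- Bessel-type bound for the frame operator. -/
theorem sum_sq_dotProduct_le {ξ : ι → m → ℝ} {F : ℕ → Finset ι} (hF : Monotone F) {γ : m → ℝ}
    (hlim : ∀ I I', Filter.Tendsto (fun N => ∑ ρ ∈ F N, ξ ρ I * ξ ρ I') Filter.atTop
      (nhds (if I = I' then γ I else 0)))
    {μ : ℝ} (hγ : ∀ I, γ I ≤ μ) (u : m → ℝ) (N : ℕ) :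
    ∑ ρ ∈ F N, (ξ ρ ⬝ᵥ u) ^ 2 ≤ μ * (u ⬝ᵥ u) := by
  have hmono : Monotone fun N => ∑ ρ ∈ F N, (ξ ρ ⬝ᵥ u) * (ξ ρ ⬝ᵥ u) := fun a b hab =>
    Finset.sum_le_sum_of_subset_of_nonneg (hF hab) fun _ _ _ => mul_self_nonneg _
  have h1 := hmono.ge_of_tendsto (tendsto_sum_dotProduct_mul hlim u u) N
  simp only [pow_two]
  refine h1.trans ?_
  rw [dotProduct, Finset.mul_sum]
  exact Finset.sum_le_sum fun I _ => mul_le_mul_of_nonneg_right (hγ I) (mul_self_nonneg _)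

theorem dotProduct_self_sum_smul_le {ξ : ι → m → ℝ} {F : ℕ → Finset ι} (hF : Monotone F)
    {γ : m → ℝ}
    (hlim : ∀ I I', Filter.Tendsto (fun N => ∑ ρ ∈ F N, ξ ρ I * ξ ρ I') Filter.atTop
      (nhds (if I = I' then γ I else 0)))
    {μ : ℝ} (hμ : 0 < μ) (hγ : ∀ I, γ I ≤ μ) (s : ι → ℝ) (N : ℕ) :
    (∑ ρ ∈ F N, s ρ • ξ ρ) ⬝ᵥ (∑ ρ ∈ F N, s ρ • ξ ρ) ≤ μ * ∑ ρ ∈ F N, s ρ ^ 2 := by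
  set y := ∑ ρ ∈ F N, s ρ • ξ ρ with hy
  have h1 : y ⬝ᵥ y = ∑ ρ ∈ F N, s ρ * (ξ ρ ⬝ᵥ y) := by
    conv_lhs => rw [hy, sum_dotProduct]
    simp only [smul_dotProduct, smul_eq_mul, ← hy]
  have h2 := sum_sq_dotProduct_le hF hlim hγ y N
  have h3 : (∑ ρ ∈ F N, s ρ * (ξ ρ ⬝ᵥ y)) ^ 2 ≤
      (∑ ρ ∈ F N, s ρ ^ 2) * ∑ ρ ∈ F N, (ξ ρ ⬝ᵥ y) ^ 2 := Finset.sum_mul_sq_le_sq_mul_sq _ _ _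
  rw [← h1] at h3
  have h4 : 0 ≤ y ⬝ᵥ y := by simpa using dotProduct_star_self_nonneg y
  have h5 : 0 ≤ ∑ ρ ∈ F N, s ρ ^ 2 := Finset.sum_nonneg fun _ _ => sq_nonneg _
  rcases h4.eq_or_lt with h0 | h0
  · rw [← h0]; positivity
  · have : (y ⬝ᵥ y) * (y ⬝ᵥ y) ≤ (μ * ∑ ρ ∈ F N, s ρ ^ 2) * (y ⬝ᵥ y) := by
      nlinarith [mul_le_mul_of_nonneg_left h2 h5]
    exact le_of_mul_le_mul_right this h0

variable {ξ : ι → m → ℝ} {F : ℕ → Finset ι} {γ : m → ℝ} {J : Matrix m m ℝ} {μ : ℝ} {w : m → ℝ}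

theorem tendsto_sum_smul_of_eigenvector
    (hlim : ∀ I I', Filter.Tendsto (fun N => ∑ ρ ∈ F N, ξ ρ I * ξ ρ I') Filter.atTop
      (nhds (if I = I' then γ I else 0)))
    (hw : ∀ I, γ I * w I = μ * w I) :
    Filter.Tendsto (fun N => ∑ ρ ∈ F N, (ξ ρ ⬝ᵥ w) • ξ ρ) Filter.atTop (nhds (μ • w)) := by
  rw [tendsto_pi_nhds]
  intro I
  have := tendsto_sum_dotProduct_mul hlim w (Pi.single I 1)
  convert this using 1
  · ext N
    simp [Finset.sum_apply]
  · simp [Pi.single_apply, hw]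

omit [DecidableEq m] in
theorem eigenvector_mulVec (hJγ : ∀ I I', J I I' * γ I' = γ I * J I I')
    (hw : ∀ I, γ I * w I = μ * w I) (I : m) : γ I * (J *ᵥ w) I = μ * (J *ᵥ w) I := by
  simp only [mulVec, dotProduct, Finset.mul_sum]
  refine Finset.sum_congr rfl fun I' _ => ?_
  rw [← mul_assoc, ← hJγ, mul_assoc, hw]
  ring

theorem mulVec_dotProduct_mulVec (hJs : J.IsSymm) (hJ : J * J = 1) (u v : m → ℝ) :
    (J *ᵥ u) ⬝ᵥ (J *ᵥ v) = u ⬝ᵥ v := by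
  rw [dotProduct_mulVec, vecMul_mulVec, ← mulVec_transpose]
  simp [hJs.eq, hJ]

theorem dotProduct_mul_dotProduct_nonneg_of_eigenvector (hF : Monotone F)
    (hFx : ∀ ρ, ∃ N, ρ ∈ F N)
    (hlim : ∀ I I', Filter.Tendsto (fun N => ∑ ρ ∈ F N, ξ ρ I * ξ ρ I') Filter.atTop
      (nhds (if I = I' then γ I else 0)))
    (hJs : J.IsSymm) (hJ : J * J = 1) (hJγ : ∀ I I', J I I' * γ I' = γ I * J I I')
    (hpos : ∀ ρ κ, 0 < ξ ρ ⬝ᵥ J *ᵥ ξ κ) (hμ : 0 < μ) (hγ : ∀ I, γ I ≤ μ)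
    (hw : ∀ I, γ I * w I = μ * w I) (κ ρ : ι) :
    0 ≤ (ξ κ ⬝ᵥ w) * (ξ ρ ⬝ᵥ J *ᵥ w) := by
  by_contra! hneg
  set a : ι → ℝ := fun ρ => ξ ρ ⬝ᵥ w
  set b : ι → ℝ := fun ρ => ξ ρ ⬝ᵥ J *ᵥ w
  have hbil (s t : ι → ℝ) (N : ℕ) :
      (∑ ρ ∈ F N, s ρ • ξ ρ) ⬝ᵥ J *ᵥ (∑ κ ∈ F N, t κ • ξ κ) =
        ∑ ρ ∈ F N, ∑ κ ∈ F N, s ρ * t κ * (ξ ρ ⬝ᵥ J *ᵥ ξ κ) := by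
    simp only [sum_dotProduct, mulVec_sum, dotProduct_sum, smul_dotProduct, mulVec_smul,
      dotProduct_smul, smul_eq_mul, Finset.mul_sum]
    rw [Finset.sum_comm]
    exact Finset.sum_congr rfl fun _ _ => Finset.sum_congr rfl fun _ _ => by ring
  have hup (N : ℕ) :
      ∑ ρ ∈ F N, ∑ κ ∈ F N, |b ρ| * |a κ| * (ξ ρ ⬝ᵥ J *ᵥ ξ κ) ≤ μ ^ 2 * (w ⬝ᵥ w) := by
    rw [← hbil (fun ρ => |b ρ|) (fun κ => |a κ|)]
    set y := ∑ ρ ∈ F N, |b ρ| • ξ ρ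
    set z := ∑ κ ∈ F N, |a κ| • ξ κ
    have hy : y ⬝ᵥ y ≤ μ * (μ * (w ⬝ᵥ w)) := by
      refine (dotProduct_self_sum_smul_le hF hlim hμ hγ (fun ρ => |b ρ|) N).trans ?_
      simp only [sq_abs]
      have := sum_sq_dotProduct_le hF hlim hγ (J *ᵥ w) N
      rw [mulVec_dotProduct_mulVec hJs hJ] at this
      exact mul_le_mul_of_nonneg_left this hμ.le
    have hz : z ⬝ᵥ z ≤ μ * (μ * (w ⬝ᵥ w)) := by
      refine (dotProduct_self_sum_smul_le hF hlim hμ hγ (fun ρ => |a ρ|) N).trans ?_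
      simp only [sq_abs]
      exact mul_le_mul_of_nonneg_left (sum_sq_dotProduct_le hF hlim hγ w N) hμ.le
    have hsq : 0 ≤ (y - J *ᵥ z) ⬝ᵥ (y - J *ᵥ z) := by
      simpa using dotProduct_star_self_nonneg (y - J *ᵥ z)
    rw [sub_dotProduct, dotProduct_sub, dotProduct_sub, mulVec_dotProduct_mulVec hJs hJ,
      dotProduct_comm (J *ᵥ z) y] at hsq
    linarith
  have hlimit : Filter.Tendsto
      (fun N => ∑ ρ ∈ F N, ∑ κ ∈ F N, b ρ * a κ * (ξ ρ ⬝ᵥ J *ᵥ ξ κ)) Filter.atTop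
      (nhds (μ ^ 2 * (w ⬝ᵥ w))) := by
    refine Filter.Tendsto.congr (hbil b a) ?_
    have h1 := tendsto_sum_smul_of_eigenvector hlim (eigenvector_mulVec hJγ hw)
    have h2 := tendsto_sum_smul_of_eigenvector hlim hw
    have hc : Continuous fun q : (m → ℝ) × (m → ℝ) => q.1 ⬝ᵥ J *ᵥ q.2 := by fun_prop
    have h3 := (hc.tendsto (μ • J *ᵥ w, μ • w)).comp (h1.prodMk_nhds h2)
    have h4 : (μ • J *ᵥ w) ⬝ᵥ J *ᵥ (μ • w) = μ ^ 2 * (w ⬝ᵥ w) := by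
      rw [mulVec_smul, smul_dotProduct, dotProduct_smul, smul_eq_mul, smul_eq_mul,
        mulVec_dotProduct_mulVec hJs hJ]
      ring
    rw [← h4]
    exact h3
  obtain ⟨N₁, hN₁⟩ := hFx ρ
  obtain ⟨N₂, hN₂⟩ := hFx κ
  have hgap : ∀ᶠ N in Filter.atTop,
      ∑ ρ ∈ F N, ∑ κ ∈ F N, b ρ * a κ * (ξ ρ ⬝ᵥ J *ᵥ ξ κ) ≤
        μ ^ 2 * (w ⬝ᵥ w) + b ρ * a κ * (ξ ρ ⬝ᵥ J *ᵥ ξ κ) := by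
    filter_upwards [Filter.eventually_ge_atTop N₁, Filter.eventually_ge_atTop N₂] with N h₁ h₂
    have hterm (x y : ι) : 0 ≤ (|b x| * |a y| - b x * a y) * (ξ x ⬝ᵥ J *ᵥ ξ y) := by
      refine mul_nonneg ?_ (hpos x y).le
      rw [← abs_mul]
      linarith [le_abs_self (b x * a y)]
    have hsingle : (|b ρ| * |a κ| - b ρ * a κ) * (ξ ρ ⬝ᵥ J *ᵥ ξ κ) ≤
        ∑ x ∈ F N, ∑ y ∈ F N, (|b x| * |a y| - b x * a y) * (ξ x ⬝ᵥ J *ᵥ ξ y) :=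
      (Finset.single_le_sum (f := fun y => (|b ρ| * |a y| - b ρ * a y) * (ξ ρ ⬝ᵥ J *ᵥ ξ y))
        (fun y _ => hterm ρ y) (hF h₂ hN₂)).trans
      (Finset.single_le_sum
        (f := fun x => ∑ y ∈ F N, (|b x| * |a y| - b x * a y) * (ξ x ⬝ᵥ J *ᵥ ξ y))
        (fun x _ => Finset.sum_nonneg fun y _ => hterm x y) (hF h₁ hN₁))
    simp only [sub_mul, Finset.sum_sub_distrib] at hsingle
    have hN := hup N
    have h0 : 0 ≤ |b ρ| * |a κ| + b ρ * a κ := by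
      rw [← abs_mul]
      linarith [neg_abs_le (b ρ * a κ)]
    have habs : |b ρ| * |a κ| = -(b ρ * a κ) := by
      rw [← abs_mul, abs_of_neg]
      rw [mul_comm]
      exact hneg
    rw [habs] at hsingle
    nlinarith [mul_pos (neg_pos.2 hneg) (hpos ρ κ)]
  have := le_of_tendsto hlimit hgap
  nlinarith [mul_pos (neg_pos.2 hneg) (hpos ρ κ)]

theorem exists_dotProduct_ne_zero_of_eigenvector
    (hlim : ∀ I I', Filter.Tendsto (fun N => ∑ ρ ∈ F N, ξ ρ I * ξ ρ I') Filter.atTop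
      (nhds (if I = I' then γ I else 0)))
    (hμ : 0 < μ) (hw : ∀ I, γ I * w I = μ * w I) (hw0 : w ≠ 0) : ∃ ρ, ξ ρ ⬝ᵥ w ≠ 0 := by
  by_contra! h
  have h1 := tendsto_sum_smul_of_eigenvector hlim hw
  simp only [h, zero_smul, Finset.sum_const_zero] at h1
  have h2 := tendsto_nhds_unique h1 tendsto_const_nhds
  exact hw0 ((smul_eq_zero.1 h2).resolve_left hμ.ne')

theorem dotProduct_mulVec_ne_zero_of_eigenvector (hF : Monotone F)
    (hFx : ∀ ρ, ∃ N, ρ ∈ F N)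
    (hlim : ∀ I I', Filter.Tendsto (fun N => ∑ ρ ∈ F N, ξ ρ I * ξ ρ I') Filter.atTop
      (nhds (if I = I' then γ I else 0)))
    (hJs : J.IsSymm) (hJ : J * J = 1) (hJγ : ∀ I I', J I I' * γ I' = γ I * J I I')
    (hpos : ∀ ρ κ, 0 < ξ ρ ⬝ᵥ J *ᵥ ξ κ) (hμ : 0 < μ) (hγ : ∀ I, γ I ≤ μ)
    (hw : ∀ I, γ I * w I = μ * w I) (hw0 : w ≠ 0) (ρ : ι) :
    ξ ρ ⬝ᵥ J *ᵥ w ≠ 0 := by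
  have hnn := dotProduct_mul_dotProduct_nonneg_of_eigenvector hF hFx hlim hJs hJ hJγ hpos hμ hγ hw
  have hJw0 : J *ᵥ w ≠ 0 := fun h => hw0 <| by
    rw [← one_mulVec w, ← hJ, ← mulVec_mulVec, h, mulVec_zero]
  obtain ⟨κ₀, hκ₀⟩ := exists_dotProduct_ne_zero_of_eigenvector hlim hμ hw hw0
  obtain ⟨ρ₁, hρ₁⟩ := exists_dotProduct_ne_zero_of_eigenvector hlim hμ
    (eigenvector_mulVec hJγ hw) hJw0
  set s := ξ ρ₁ ⬝ᵥ J *ᵥ w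
  have hc : Continuous fun q : m → ℝ => s * (ξ ρ ⬝ᵥ J *ᵥ q) := by fun_prop
  have h1 := (hc.tendsto (μ • w)).comp (tendsto_sum_smul_of_eigenvector hlim hw)
  obtain ⟨N₀, hN₀⟩ := hFx κ₀
  have h2 : ∀ᶠ N in Filter.atTop, (ξ κ₀ ⬝ᵥ w) * s * (ξ ρ ⬝ᵥ J *ᵥ ξ κ₀) ≤
      s * (ξ ρ ⬝ᵥ J *ᵥ ∑ κ ∈ F N, (ξ κ ⬝ᵥ w) • ξ κ) := by
    filter_upwards [Filter.eventually_ge_atTop N₀] with N hN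
    simp only [mulVec_sum, dotProduct_sum, mulVec_smul, dotProduct_smul, smul_eq_mul,
      Finset.mul_sum]
    refine le_trans (le_of_eq (by ring)) (Finset.single_le_sum
      (f := fun κ => s * ((ξ κ ⬝ᵥ w) * (ξ ρ ⬝ᵥ J *ᵥ ξ κ))) (fun κ _ => ?_) (hF hN hN₀))
    have := mul_nonneg (hnn κ ρ₁) (hpos ρ κ).le
    linarith
  have h3 := ge_of_tendsto h1 h2
  have h4 : 0 < (ξ κ₀ ⬝ᵥ w) * s := lt_of_le_of_ne (hnn κ₀ ρ₁) (mul_ne_zero hκ₀ hρ₁).symm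
  have h5 := mul_pos h4 (hpos ρ κ₀)
  intro h0
  rw [mulVec_smul, dotProduct_smul, h0] at h3
  simp at h3
  linarith

/-- Perron–Frobenius: the extremal eigenvectors of the frame operator pair with all frame vectors
with one strict sign. -/
theorem dotProduct_mul_dotProduct_pos_of_eigenvector (hF : Monotone F)
    (hFx : ∀ ρ, ∃ N, ρ ∈ F N)
    (hlim : ∀ I I', Filter.Tendsto (fun N => ∑ ρ ∈ F N, ξ ρ I * ξ ρ I') Filter.atTop
      (nhds (if I = I' then γ I else 0)))
    (hJs : J.IsSymm) (hJ : J * J = 1) (hJγ : ∀ I I', J I I' * γ I' = γ I * J I I')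
    (hpos : ∀ ρ κ, 0 < ξ ρ ⬝ᵥ J *ᵥ ξ κ) (hμ : 0 < μ) (hγ : ∀ I, γ I ≤ μ)
    (hw : ∀ I, γ I * w I = μ * w I) (hw0 : w ≠ 0) (κ ρ : ι) :
    0 < (ξ κ ⬝ᵥ w) * (ξ ρ ⬝ᵥ J *ᵥ w) := by
  have hJw0 : J *ᵥ w ≠ 0 := fun h => hw0 <| by
    rw [← one_mulVec w, ← hJ, ← mulVec_mulVec, h, mulVec_zero]
  have h1 := dotProduct_mulVec_ne_zero_of_eigenvector hF hFx hlim hJs hJ hJγ hpos hμ hγ hw hw0 ρ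
  have h2 := dotProduct_mulVec_ne_zero_of_eigenvector hF hFx hlim hJs hJ hJγ hpos hμ hγ
    (eigenvector_mulVec hJγ hw) hJw0 κ
  rw [mulVec_mulVec, hJ, one_mulVec] at h2
  exact lt_of_le_of_ne (dotProduct_mul_dotProduct_nonneg_of_eigenvector hF hFx hlim hJs hJ hJγ
    hpos hμ hγ hw κ ρ) (mul_ne_zero h2 h1).symm

end PerronFrobenius

/-- The `p`-th compound matrix, whose entries are the minors of order `p`. -/
noncomputable def Matrix.compound {R α β : Type*} [CommRing R] [LinearOrder α] [LinearOrder β]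
    (p : ℕ) (M : Matrix α β R) : Matrix (Fin p ↪o α) (Fin p ↪o β) R :=
  Matrix.of fun I K => (M.submatrix I K).det

section Compound

variable {R α β δ : Type*} [CommRing R] [LinearOrder α] [LinearOrder β] [LinearOrder δ]

theorem Matrix.compound_mul [Fintype β] (p : ℕ) (M : Matrix α β R) (N : Matrix β δ R) :
    (M * N).compound p = M.compound p * N.compound p := by
  ext I K
  have : (M * N).submatrix I K = M.submatrix I id * N.submatrix id K := rfl
  rw [compound, of_apply, this, det_mul_eq_sum_orderEmbedding]
  rfl

theorem Matrix.compound_transpose (p : ℕ) (M : Matrix α β R) :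
    Mᵀ.compound p = (M.compound p)ᵀ := by
  ext I K
  simp only [compound, of_apply, transpose_apply]
  rw [← det_transpose]
  rfl

theorem Matrix.compound_diagonal (p : ℕ) (d : α → R) :
    (diagonal d).compound p = diagonal fun I : Fin p ↪o α => ∏ j, d (I j) := by
  ext I K
  rw [compound, of_apply]
  by_cases h : I = K
  · subst h
    rw [diagonal_apply_eq, ← det_diagonal]
    congr 1
    exact submatrix_diagonal _ _ I.injective
  · rw [diagonal_apply_ne _ h]
    have : ∃ j, ∀ l, I j ≠ K l := by
      by_contra! hcon
      apply h
      rw [← OrderEmbedding.range_inj]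
      have hsub : Finset.univ.image I ⊆ Finset.univ.image K := by
        intro y hy
        obtain ⟨j, _, rfl⟩ := Finset.mem_image.1 hy
        obtain ⟨l, hl⟩ := hcon j
        exact Finset.mem_image.2 ⟨l, Finset.mem_univ _, hl.symm⟩
      have := Finset.eq_of_subset_of_card_le hsub (by
        rw [Finset.card_image_of_injective _ I.injective,
          Finset.card_image_of_injective _ K.injective])
      simpa using congrArg (fun s : Finset α => (s : Set α)) this
    obtain ⟨j, hj⟩ := this
    exact det_eq_zero_of_row_eq_zero j fun l => diagonal_apply_ne _ (hj l)

theorem Matrix.compound_one (p : ℕ) : (1 : Matrix α α R).compound p = 1 := by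
  rw [← diagonal_one, compound_diagonal]
  simp

end Compound

theorem Matrix.tendsto_pow_of_spectrum_norm_lt_one {n : ℕ} (A : Matrix (Fin n) (Fin n) ℝ)
    (hA : ∀ μ ∈ spectrum ℂ (A.map (Complex.ofReal ·)), ‖μ‖ < 1) :
    Filter.Tendsto (fun N => A ^ N) Filter.atTop (nhds 0) := by
  rcases Nat.eq_zero_or_pos n with rfl | hn
  · exact tendsto_const_nhds.congr fun N => Subsingleton.elim _ _
  have : NeZero n := ⟨hn.ne'⟩
  let _ := Matrix.linftyOpNormedRing (n := Fin n) (α := ℂ)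
  let _ := Matrix.linftyOpNormedAlgebra (n := Fin n) (R := ℂ) (α := ℂ)
  set M : Matrix (Fin n) (Fin n) ℂ := A.map (Complex.ofReal ·) with hM
  have hrad : spectralRadius ℂ M < ((1 : NNReal) : ENNReal) :=
    spectrum.spectralRadius_lt_of_forall_lt M fun z hz => by
      rw [← NNReal.coe_lt_coe]
      exact hA z hz
  obtain ⟨q, hq, hq1⟩ := ENNReal.lt_iff_exists_nnreal_btwn.1 hrad
  have hev := (spectrum.pow_nnnorm_pow_one_div_tendsto_nhds_spectralRadius M).eventually_lt_const hq
  have hq1' : q < 1 := by exact_mod_cast hq1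
  have hnorm : Filter.Tendsto (fun N => M ^ N) Filter.atTop (nhds 0) := by
    refine tendsto_zero_iff_norm_tendsto_zero.2 ?_
    refine squeeze_zero' (Filter.Eventually.of_forall fun _ => norm_nonneg _) ?_
      (tendsto_pow_atTop_nhds_zero_of_lt_one (r := (q : ℝ)) q.2 (by exact_mod_cast hq1'))
    filter_upwards [hev, Filter.eventually_gt_atTop 0] with N hN hN0
    have hN0' : (0 : ℝ) < N := by exact_mod_cast hN0
    have h1 : (‖M ^ N‖₊ : ENNReal) < (q : ENNReal) ^ (N : ℝ) := by
      have := ENNReal.rpow_lt_rpow hN hN0'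
      rwa [← ENNReal.rpow_mul, one_div, inv_mul_cancel₀ hN0'.ne', ENNReal.rpow_one] at this
    rw [ENNReal.rpow_natCast] at h1
    have h2 : ‖M ^ N‖₊ < q ^ N := by exact_mod_cast h1
    exact_mod_cast h2.le
  have hMpow (N : ℕ) : M ^ N = (A ^ N).map (Complex.ofReal ·) := by
    have := map_pow (Complex.ofRealHom.mapMatrix (m := Fin n)) A N
    exact this.symm
  refine tendsto_pi_nhds.2 fun i => tendsto_pi_nhds.2 fun j => ?_
  have h1 := ((continuous_id.matrix_elem i j).tendsto (0 : Matrix (Fin n) (Fin n) ℂ)).comp hnorm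
  have h2 := (Complex.continuous_re.tendsto _).comp h1
  simpa [Function.comp_def, hMpow] using h2

section Gramian

variable {n : ℕ} {A : Matrix (Fin n) (Fin n) ℝ}

theorem tendsto_pow_mul_mul_transpose_pow
    (hA : Filter.Tendsto (fun N => A ^ N) Filter.atTop (nhds 0))
    (Y : Matrix (Fin n) (Fin n) ℝ) :
    Filter.Tendsto (fun N => A ^ N * Y * Aᵀ ^ N) Filter.atTop (nhds 0) := by
  have hc : Continuous fun M : Matrix (Fin n) (Fin n) ℝ => M * Y * Mᵀ := by fun_prop
  have := (hc.tendsto 0).comp hA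
  simpa [Function.comp_def, transpose_pow] using this

theorem eq_zero_of_mul_mul_transpose_eq
    (hA : Filter.Tendsto (fun N => A ^ N) Filter.atTop (nhds 0))
    {Y : Matrix (Fin n) (Fin n) ℝ} (hY : A * Y * Aᵀ = Y) : Y = 0 := by
  have h (N : ℕ) : Y = A ^ N * Y * Aᵀ ^ N := by
    induction N with
    | zero => simp
    | succ N ih =>
      conv_lhs => rw [ih, ← hY]
      rw [pow_succ, pow_succ' Aᵀ]
      simp only [Matrix.mul_assoc]
  exact tendsto_nhds_unique (tendsto_const_nhds.congr h) (tendsto_pow_mul_mul_transpose_pow hA Y)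

variable {b : Fin n → ℝ} {S : Matrix (Fin n) (Fin n) ℝ}

theorem tendsto_sum_vecMulVec_of_stein
    (hA : Filter.Tendsto (fun N => A ^ N) Filter.atTop (nhds 0))
    (hS : A * S * Aᵀ - S + vecMulVec b b = 0) :
    Filter.Tendsto (fun N => ∑ i ∈ Finset.range N, vecMulVec ((A ^ i) *ᵥ b) ((A ^ i) *ᵥ b))
      Filter.atTop (nhds S) := by
  have hb : vecMulVec b b = S - A * S * Aᵀ := by
    rw [← sub_eq_zero, ← hS]
    abel
  have h (N : ℕ) : S - A ^ N * S * Aᵀ ^ N =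
      ∑ i ∈ Finset.range N, vecMulVec ((A ^ i) *ᵥ b) ((A ^ i) *ᵥ b) := by
    induction N with
    | zero => simp
    | succ N ih =>
      rw [Finset.sum_range_succ, ← ih]
      have : vecMulVec ((A ^ N) *ᵥ b) ((A ^ N) *ᵥ b) = A ^ N * vecMulVec b b * Aᵀ ^ N := by
        rw [mul_vecMulVec, vecMulVec_mul, ← transpose_pow, vecMul_transpose]
      rw [this, hb, pow_succ, pow_succ' Aᵀ]
      simp only [Matrix.mul_sub, Matrix.sub_mul, Matrix.mul_assoc]
      abel
  have := (tendsto_const_nhds (x := S)).sub (tendsto_pow_mul_mul_transpose_pow hA S)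
  rw [sub_zero] at this
  exact this.congr h

end Gramian

/-- The symmetric intertwiner between a controllable realization and its transpose. -/
theorem exists_symm_intertwiner {n : ℕ} (A : Matrix (Fin n) (Fin n) ℝ) (b c : Fin n → ℝ)
    (hdet : (ctrbMatrix A b).det ≠ 0) :
    ∃ T : Matrix (Fin n) (Fin n) ℝ, T.IsSymm ∧ T * A = Aᵀ * T ∧ T *ᵥ b = c := by
  set K := ctrbMatrix A b with hK
  have hKu : IsUnit K.det := isUnit_iff_ne_zero.2 hdet
  let T := ctrbMatrix Aᵀ c * K⁻¹
  have hTK : T * K = ctrbMatrix Aᵀ c := nonsing_inv_mul_cancel_right _ _ hKu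
  have hcol (j : Fin n) : T *ᵥ ((A ^ (j : ℕ)) *ᵥ b) = (Aᵀ ^ (j : ℕ)) *ᵥ c := by
    ext i
    exact congrFun (congrFun hTK i) j
  have hlt (q : ℝ[X]) (hq : q.natDegree < n) :
      T *ᵥ (aeval A q *ᵥ b) = aeval Aᵀ q *ᵥ c := by
    rw [aeval_eq_sum_range' hq, aeval_eq_sum_range' hq, sum_mulVec, sum_mulVec, mulVec_sum]
    refine Finset.sum_congr rfl fun j hj => ?_
    rw [smul_mulVec, smul_mulVec, mulVec_smul, hcol ⟨j, Finset.mem_range.1 hj⟩]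
  have hpow (j : ℕ) : T *ᵥ ((A ^ j) *ᵥ b) = (Aᵀ ^ j) *ᵥ c := by
    rcases Nat.eq_zero_or_pos n with h0 | h0
    · subst h0
      exact Subsingleton.elim _ _
    have hmonic := A.charpoly_monic
    have hd : (X ^ j %ₘ A.charpoly).natDegree < n := by
      have := natDegree_modByMonic_lt (X ^ j) hmonic (fun h => by
        have := congrArg natDegree h
        rw [charpoly_natDegree_eq_dim, natDegree_one, Fintype.card_fin] at this
        omega)
      rwa [charpoly_natDegree_eq_dim, Fintype.card_fin] at this
    have h1 := hlt _ hd
    rw [aeval_modByMonic_eq_self_of_root (aeval_self_charpoly A),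
      aeval_modByMonic_eq_self_of_root (by
        rw [← charpoly_transpose]
        exact aeval_self_charpoly Aᵀ)] at h1
    simpa using h1
  have hcancel {M N : Matrix (Fin n) (Fin n) ℝ}
      (h : ∀ j : Fin n, M *ᵥ ((A ^ (j : ℕ)) *ᵥ b) = N *ᵥ ((A ^ (j : ℕ)) *ᵥ b)) : M = N := by
    have : M * K = N * K := by
      ext i j
      exact congrFun (h j) i
    exact ((isUnit_iff_isUnit_det K).2 hKu).mul_right_cancel this
  refine ⟨T, ?_, ?_, by simpa using hpow 0⟩
  · have hsym : Kᵀ * Tᵀ * K = Kᵀ * T * K := by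
      have hform (i j : ℕ) : ((A ^ i) *ᵥ b) ⬝ᵥ T *ᵥ ((A ^ j) *ᵥ b) =
          b ⬝ᵥ (Aᵀ ^ (i + j)) *ᵥ c := by
        rw [hpow, ← vecMul_transpose, ← dotProduct_mulVec, transpose_pow, mulVec_mulVec,
          ← pow_add]
      have hentry (i j : Fin n) : (Kᵀ * T * K) i j =
          ((A ^ (i : ℕ)) *ᵥ b) ⬝ᵥ T *ᵥ ((A ^ (j : ℕ)) *ᵥ b) := by
        rw [Matrix.mul_assoc]
        rfl
      have : (Kᵀ * T * K)ᵀ = Kᵀ * T * K := by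
        ext i j
        rw [transpose_apply, hentry, hentry, hform, hform, add_comm]
      rw [← this]
      simp [Matrix.mul_assoc]
    have h1 := ((isUnit_iff_isUnit_det K).2 hKu).mul_right_cancel hsym
    have hKt : IsUnit Kᵀ.det := by rwa [det_transpose]
    exact ((isUnit_iff_isUnit_det Kᵀ).2 hKt).mul_left_cancel h1
  · refine hcancel fun j => ?_
    have h1 : T *ᵥ (A *ᵥ ((A ^ (j : ℕ)) *ᵥ b)) = Aᵀ *ᵥ (T *ᵥ ((A ^ (j : ℕ)) *ᵥ b)) := by
      rw [mulVec_mulVec b, ← pow_succ', hpow, hpow, mulVec_mulVec, ← pow_succ']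
    rwa [mulVec_mulVec, mulVec_mulVec _ Aᵀ] at h1

theorem exists_signature {n : ℕ} {A : Matrix (Fin n) (Fin n) ℝ} {b c σ : Fin n → ℝ}
    (hbal : IsBalancedRealization A b c σ) :
    ∃ T : Matrix (Fin n) (Fin n) ℝ, T.IsSymm ∧ T * A = Aᵀ * T ∧ T *ᵥ b = c ∧ T * T = 1 ∧
      T * diagonal σ = diagonal σ * T := by
  obtain ⟨hspec, hctrb, -, -, hσ, hc, ho⟩ := hbal
  have hA := A.tendsto_pow_of_spectrum_norm_lt_one hspec
  have hAt : Filter.Tendsto (fun N => Aᵀ ^ N) Filter.atTop (nhds 0) := by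
    have hcont : Continuous fun M : Matrix (Fin n) (Fin n) ℝ => Mᵀ := by fun_prop
    have := (hcont.tendsto 0).comp hA
    simpa [Function.comp_def, transpose_pow] using this
  obtain ⟨T, hTs, hTA, hTb⟩ := exists_symm_intertwiner A b c hctrb
  refine ⟨T, hTs, hTA, hTb, ?_⟩
  set S := diagonal σ
  have hcc : vecMulVec c c = T * vecMulVec b b * T := by
    rw [mul_vecMulVec, vecMulVec_mul, ← hTs.eq, vecMul_transpose, hTs.eq, hTb]
  have hTST : T * S * T = S := by
    rw [← sub_eq_zero]
    refine eq_zero_of_mul_mul_transpose_eq hAt ?_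
    rw [transpose_transpose, Matrix.mul_sub, Matrix.sub_mul]
    have h1 : Aᵀ * (T * S * T) * A = T * (A * S * Aᵀ) * T := by
      calc Aᵀ * (T * S * T) * A = (Aᵀ * T) * S * (T * A) := by simp only [Matrix.mul_assoc]
        _ = (T * A) * S * (Aᵀ * T) := by rw [hTA]
        _ = T * (A * S * Aᵀ) * T := by simp only [Matrix.mul_assoc]
    have h2 : A * S * Aᵀ = S - vecMulVec b b := by
      rw [eq_sub_iff_add_eq, ← sub_eq_zero, ← hc]
      abel
    have h3 : Aᵀ * S * A = S - vecMulVec c c := by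
      rw [eq_sub_iff_add_eq, ← sub_eq_zero, ← ho]
      abel
    rw [h1, h2, h3, hcc, Matrix.mul_sub, Matrix.sub_mul]
    abel
  have hsq : T * (S * S) = (S * S) * T := by
    calc T * (S * S) = T * S * (T * S * T) := by rw [hTST, Matrix.mul_assoc]
      _ = (T * S * T) * S * T := by simp only [Matrix.mul_assoc]
      _ = (S * S) * T := by rw [hTST]
  have hcomm : T * S = S * T := by
    ext i j
    have := congrFun (congrFun hsq i) j
    simp only [S, diagonal_mul_diagonal, mul_diagonal, diagonal_mul] at this ⊢
    have h0 : (T i j * σ j - σ i * T i j) * (σ j + σ i) = 0 := by linear_combination this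
    have := hσ i
    have := hσ j
    rcases mul_eq_zero.1 h0 with h | h
    · linarith
    · linarith
  refine ⟨?_, hcomm⟩
  have hSu : IsUnit S := by
    rw [isUnit_iff_isUnit_det, det_diagonal, isUnit_iff_ne_zero]
    exact Finset.prod_ne_zero_iff.2 fun i _ => (hσ i).ne'
  refine hSu.mul_left_cancel ?_
  rw [Matrix.mul_one, ← Matrix.mul_assoc, ← hcomm, hTST]

section BalancedMinors

variable {n : ℕ} {A : Matrix (Fin n) (Fin n) ℝ} {b c σ : Fin n → ℝ}

/-- The transposed infinite controllability matrix, with rows `Aⁱb`. -/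
def ctrbRows (A : Matrix (Fin n) (Fin n) ℝ) (b : Fin n → ℝ) : Matrix ℕ (Fin n) ℝ :=
  Matrix.of fun i => (A ^ i) *ᵥ b

/-- The strictly increasing `p`-tuples of indices below `N`. -/
noncomputable def boundedTuples (p N : ℕ) : Finset (Fin p ↪o ℕ) :=
  Finset.univ.map ⟨fun ρ : Fin p ↪o Fin N => ρ.trans (Fin.valOrderEmb N), fun _ _ h => by
    ext i
    exact congrArg (fun f : Fin p ↪o ℕ => f i) h⟩

theorem mem_boundedTuples {p N : ℕ} {ρ : Fin p ↪o ℕ} :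
    ρ ∈ boundedTuples p N ↔ ∀ i, ρ i < N := by
  constructor
  · intro h
    obtain ⟨ρ', _, rfl⟩ := Finset.mem_map.1 h
    exact fun i => (ρ' i).2
  · intro h
    exact Finset.mem_map.2 ⟨OrderEmbedding.ofStrictMono (fun i => ⟨ρ i, h i⟩)
      fun _ _ hij => ρ.strictMono hij, Finset.mem_univ _, by ext i; rfl⟩

theorem boundedTuples_mono (p : ℕ) : Monotone (boundedTuples p) := fun _ _ h _ hρ =>
  mem_boundedTuples.2 fun i => (mem_boundedTuples.1 hρ i).trans_le h

theorem exists_mem_boundedTuples {p : ℕ} (ρ : Fin p ↪o ℕ) : ∃ N, ρ ∈ boundedTuples p N :=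
  ⟨(∑ i, ρ i) + 1, mem_boundedTuples.2 fun i => Nat.lt_succ_of_le
    (Finset.single_le_sum (f := fun i => ρ i) (fun _ _ => Nat.zero_le _) (Finset.mem_univ i))⟩

/-- The limiting Cauchy–Binet formula. -/
theorem tendsto_sum_compound_mul_compound {Y Z : Matrix ℕ (Fin n) ℝ}
    {S : Matrix (Fin n) (Fin n) ℝ}
    (h : Filter.Tendsto (fun N => ∑ i ∈ Finset.range N, vecMulVec (Y i) (Z i)) Filter.atTop
      (nhds S)) (p : ℕ) (I K : Fin p ↪o Fin n) :
    Filter.Tendsto (fun N => ∑ ρ ∈ boundedTuples p N, Y.compound p ρ I * Z.compound p ρ K)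
      Filter.atTop (nhds (S.compound p I K)) := by
  have hc : Continuous fun M : Matrix (Fin n) (Fin n) ℝ => M.compound p I K := by
    unfold Matrix.compound
    simp only [of_apply]
    fun_prop
  refine ((hc.tendsto S).comp h).congr fun N => ?_
  have hprod : ∑ i ∈ Finset.range N, vecMulVec (Y i) (Z i) =
      (Y.submatrix (Fin.val : Fin N → ℕ) id)ᵀ * Z.submatrix (Fin.val : Fin N → ℕ) id := by
    ext i j
    rw [Matrix.sum_apply, mul_apply, Finset.sum_range]
    rfl
  rw [Function.comp_apply, hprod, compound_mul, compound_transpose, mul_apply, boundedTuples,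
    Finset.sum_map]
  rfl

theorem compound_ctrbRows_mul_mul_transpose {T : Matrix (Fin n) (Fin n) ℝ} (hTs : T.IsSymm)
    (hTA : T * A = Aᵀ * T) (hTb : T *ᵥ b = c) (p : ℕ) (ρ κ : Fin p ↪o ℕ) :
    (ctrbRows A b).compound p ρ ⬝ᵥ T.compound p *ᵥ (ctrbRows A b).compound p κ =
      (hankelSub (fun t => c ⬝ᵥ (A ^ t).mulVec b) ρ κ).det := by
  have h1 : (ctrbRows A b).compound p ρ ⬝ᵥ T.compound p *ᵥ (ctrbRows A b).compound p κ =
      (ctrbRows A b * T * (ctrbRows A b)ᵀ).compound p ρ κ := by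
    rw [compound_mul, compound_mul, compound_transpose, Matrix.mul_assoc]
    rfl
  have hpow (i : ℕ) : T * A ^ i = Aᵀ ^ i * T := by
    induction i with
    | zero => simp
    | succ i ih => rw [pow_succ, ← Matrix.mul_assoc, ih, Matrix.mul_assoc, hTA, pow_succ,
        Matrix.mul_assoc]
  rw [h1, compound, of_apply]
  congr 1
  ext i j
  have h2 : (ctrbRows A b * T * (ctrbRows A b)ᵀ) (ρ i) (κ j) =
      ((A ^ ρ i) *ᵥ b) ⬝ᵥ T *ᵥ ((A ^ κ j) *ᵥ b) := by
    rw [Matrix.mul_assoc]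
    rfl
  have h3 : (T *ᵥ b) ᵥ* A ^ ρ i = T *ᵥ ((A ^ ρ i) *ᵥ b) := by
    rw [← mulVec_transpose, transpose_pow, mulVec_mulVec, mulVec_mulVec, hpow]
  rw [submatrix_apply, h2, hankelSub, of_apply, pow_add, ← mulVec_mulVec, ← hTb,
    dotProduct_mulVec (T *ᵥ b), h3, dotProduct_mulVec, ← mulVec_transpose, hTs.eq]

theorem le_orderEmbedding_val {p : ℕ} (I : Fin p ↪o Fin n) (j : Fin p) : (j : ℕ) ≤ I j := by
  obtain ⟨j, hj⟩ := j
  induction j with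
  | zero => exact Nat.zero_le _
  | succ j ih =>
    have h1 := ih (by omega)
    have h2 : I ⟨j, by omega⟩ < I ⟨j + 1, hj⟩ := I.strictMono (Fin.mk_lt_mk.2 j.lt_succ_self)
    have h3 := Fin.lt_def.1 h2
    simp only at h1 ⊢
    omega

theorem prod_le_prod_castLE (hmono : Antitone σ) (hσ : ∀ i, 0 < σ i) {p : ℕ} (hp : p ≤ n)
    (I : Fin p ↪o Fin n) : ∏ j, σ (I j) ≤ ∏ j, σ (Fin.castLEOrderEmb hp j) :=
  Finset.prod_le_prod (fun _ _ => (hσ _).le) fun j _ =>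
    hmono (Fin.le_def.2 (le_orderEmbedding_val I j))

/-- Extremal eigenvectors of the compound Gramian have strict sign against all minors of the
controllability matrix. -/
theorem compound_ctrbRows_sign (hbal : IsBalancedRealization A b c σ) {k : ℕ}
    (hk : HankelStrictlyKPositive (fun t => c ⬝ᵥ (A ^ t).mulVec b) k)
    {T : Matrix (Fin n) (Fin n) ℝ} (hTs : T.IsSymm)
    (hTA : T * A = Aᵀ * T) (hTb : T *ᵥ b = c) (hTT : T * T = 1)
    (hTσ : T * diagonal σ = diagonal σ * T) {p : ℕ} (hp1 : 1 ≤ p) (hpk : p ≤ k) (hpn : p ≤ n)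
    {w : (Fin p ↪o Fin n) → ℝ}
    (hw : ∀ I, (∏ j, σ (I j)) * w I = (∏ j, σ (Fin.castLEOrderEmb hpn j)) * w I)
    (hw0 : w ≠ 0) (κ ρ : Fin p ↪o ℕ) :
    0 < ((ctrbRows A b).compound p κ ⬝ᵥ w) *
      ((ctrbRows A b).compound p ρ ⬝ᵥ T.compound p *ᵥ w) := by
  classical
  obtain ⟨hspec, -, -, hmono, hσ, hc, -⟩ := hbal
  have hA := A.tendsto_pow_of_spectrum_norm_lt_one hspec
  have hgram := tendsto_sum_vecMulVec_of_stein hA hc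
  refine dotProduct_mul_dotProduct_pos_of_eigenvector (ξ := (ctrbRows A b).compound p)
    (F := boundedTuples p) (γ := fun I => ∏ j, σ (I j))
    (μ := ∏ j, σ (Fin.castLEOrderEmb hpn j)) (boundedTuples_mono p) exists_mem_boundedTuples
    (fun I K => ?_) ?_ ?_ (fun I K => ?_) (fun ρ κ => ?_) (Finset.prod_pos fun j _ => hσ _)
    (fun I => prod_le_prod_castLE hmono hσ hpn I) hw hw0 κ ρ
  · have := tendsto_sum_compound_mul_compound (Y := ctrbRows A b) (Z := ctrbRows A b) hgram p I K
    rwa [compound_diagonal, diagonal_apply] at this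
  · rw [IsSymm, ← compound_transpose, hTs.eq]
  · rw [← compound_mul, hTT, compound_one]
  · have := congrArg (compound p) hTσ
    rw [compound_mul, compound_mul, compound_diagonal] at this
    simpa [mul_diagonal, diagonal_mul] using congrFun (congrFun this I) K
  · rw [compound_ctrbRows_mul_mul_transpose hTs hTA hTb]
    exact hk p hp1 hpk ρ κ ρ.strictMono κ.strictMono

/-- The leading Hankel singular values are separated. -/
theorem singularValue_gap (hbal : IsBalancedRealization A b c σ) {k : ℕ}
    (hk : HankelStrictlyKPositive (fun t => c ⬝ᵥ (A ^ t).mulVec b) k)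
    {p : ℕ} (hpk : p + 1 ≤ k) (hpn : p + 1 < n) : σ ⟨p + 1, hpn⟩ < σ ⟨p, by omega⟩ := by
  classical
  obtain ⟨T, hTs, hTA, hTb, hTT, hTσ⟩ := exists_signature hbal
  have hmono := hbal.2.2.2.1
  refine lt_of_le_of_ne (hmono _ _ (Fin.mk_le_mk.2 p.le_succ)) fun heq => ?_
  let e : Fin (p + 1) ↪o Fin n := Fin.castLEOrderEmb hpn.le
  let e' : Fin (p + 1) ↪o Fin n := OrderEmbedding.ofStrictMono
    (fun j => if (j : ℕ) = p then ⟨p + 1, hpn⟩ else Fin.castLE hpn.le j) fun i j hij => by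
      have hij' := Fin.lt_def.1 hij
      have := j.2
      rw [Fin.lt_def]
      simp only
      split_ifs <;> simp <;> omega
  have he'_apply (j : Fin (p + 1)) :
      e' j = if (j : ℕ) = p then ⟨p + 1, hpn⟩ else Fin.castLE hpn.le j := rfl
  have hne : e ≠ e' := fun h => by
    have := congrArg (fun f : Fin (p + 1) ↪o Fin n => ((f (Fin.last p) : Fin n) : ℕ)) h
    simp [e, he'_apply] at this
  have hprod : ∏ j, σ (e' j) = ∏ j, σ (e j) := by
    refine Finset.prod_congr rfl fun j _ => ?_
    rw [he'_apply]
    split_ifs with hj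
    · rw [heq]
      congr 1
      exact Fin.ext hj.symm
    · rfl
  have hsign {w : (Fin (p + 1) ↪o Fin n) → ℝ}
      (hw : ∀ I, (∏ j, σ (I j)) * w I = (∏ j, σ (e j)) * w I) (hw0 : w ≠ 0)
      (ρ : Fin (p + 1) ↪o ℕ) :=
    compound_ctrbRows_sign hbal hk hTs hTA hTb hTT hTσ (Nat.le_add_left 1 p) hpk hpn.le hw hw0 ρ ρ
  let ρ : Fin (p + 1) ↪o ℕ := Fin.valOrderEmb (p + 1)
  set f : ((Fin (p + 1) ↪o Fin n) → ℝ) → ℝ :=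
    fun w => (ctrbRows A b).compound (p + 1) ρ ⬝ᵥ T.compound (p + 1) *ᵥ w with hf
  have he' : f (Pi.single e' 1) ≠ 0 := by
    refine right_ne_zero_of_mul (hsign (fun I => ?_) (by simp) ρ).ne'
    by_cases h : I = e'
    · rw [h, hprod]
    · simp [h]
  set w : (Fin (p + 1) ↪o Fin n) → ℝ :=
    f (Pi.single e' 1) • Pi.single e 1 - f (Pi.single e 1) • Pi.single e' 1 with hw
  refine right_ne_zero_of_mul (hsign (w := w) (fun I => ?_) (fun h => he' ?_) ρ).ne' ?_
  · by_cases h : I = e'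
    · rw [h, hprod]
    · by_cases h2 : I = e
      · rw [h2]
      · simp [hw, h, h2]
  · simpa [hw, Pi.single_apply, hne] using congrFun h e
  · change f w = 0
    simp only [hw, hf, mulVec_sub, dotProduct_sub, mulVec_smul, dotProduct_smul, smul_eq_mul]
    ring

theorem singularValue_strictAnti_leading (hbal : IsBalancedRealization A b c σ) {k : ℕ}
    (hk : HankelStrictlyKPositive (fun t => c ⬝ᵥ (A ^ t).mulVec b) k)
    {i j : Fin n} (hi : (i : ℕ) < k) (hij : i < j) : σ j < σ i := by
  obtain ⟨i, hi'⟩ := i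
  have hlt : i + 1 < n := lt_of_le_of_lt (Nat.succ_le_of_lt (Fin.lt_def.1 hij)) j.2
  refine lt_of_le_of_lt ?_ (singularValue_gap hbal hk hi hlt)
  exact hbal.2.2.2.1 _ _ (Fin.le_def.2 (Nat.succ_le_of_lt (Fin.lt_def.1 hij)))

theorem signature_apply_of_ne (hbal : IsBalancedRealization A b c σ) {k : ℕ}
    (hk : HankelStrictlyKPositive (fun t => c ⬝ᵥ (A ^ t).mulVec b) k)
    {T : Matrix (Fin n) (Fin n) ℝ} (hTσ : T * diagonal σ = diagonal σ * T)
    {i j : Fin n} (hj : (j : ℕ) < k) (hij : i ≠ j) : T i j = 0 := by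
  have h := congrFun (congrFun hTσ i) j
  rw [mul_diagonal, diagonal_mul] at h
  have hne : σ j ≠ σ i := by
    rcases lt_or_gt_of_ne hij with hlt | hgt
    · refine (singularValue_strictAnti_leading hbal hk ?_ hlt).ne
      exact (Fin.lt_def.1 hlt).trans hj
    · exact (singularValue_strictAnti_leading hbal hk hj hgt).ne'
  have : T i j * (σ j - σ i) = 0 := by linarith
  exact (mul_eq_zero.1 this).resolve_right (sub_ne_zero.2 hne)

theorem compound_mulVec_single_of_leading {T : Matrix (Fin n) (Fin n) ℝ} {p : ℕ} (hpn : p ≤ n)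
    (hT : ∀ i j : Fin n, (j : ℕ) < p → i ≠ j → T i j = 0) :
    T.compound p *ᵥ Pi.single (Fin.castLEOrderEmb hpn) 1 =
      (∏ j : Fin p, T (Fin.castLE hpn j) (Fin.castLE hpn j)) •
        Pi.single (Fin.castLEOrderEmb hpn) 1 := by
  ext I
  have h : T.compound p I (Fin.castLEOrderEmb hpn) =
      (diagonal fun i => T i i).compound p I (Fin.castLEOrderEmb hpn) := by
    rw [compound, compound, of_apply, of_apply]
    congr 1
    ext i j
    rw [submatrix_apply, submatrix_apply]
    by_cases hij : I i = Fin.castLEOrderEmb hpn j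
    · rw [hij, diagonal_apply_eq]
    · rw [diagonal_apply_ne _ hij, hT _ _ j.2 hij]
  rw [mulVec_single_one, col_apply, h, compound_diagonal, diagonal_apply, Pi.smul_apply,
    Pi.single_apply]
  split_ifs with hI
  · rw [hI, smul_eq_mul, mul_one]
    rfl
  · rw [smul_zero]

theorem compound_ctrbRows_leading_sign (hbal : IsBalancedRealization A b c σ) {k : ℕ}
    (hk : HankelStrictlyKPositive (fun t => c ⬝ᵥ (A ^ t).mulVec b) k)
    {T : Matrix (Fin n) (Fin n) ℝ} (hTs : T.IsSymm)
    (hTA : T * A = Aᵀ * T) (hTb : T *ᵥ b = c) (hTT : T * T = 1)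
    (hTσ : T * diagonal σ = diagonal σ * T) {p : ℕ} (hp1 : 1 ≤ p) (hpk : p ≤ k) (hpn : p ≤ n)
    (κ ρ : Fin p ↪o ℕ) :
    0 < (∏ j : Fin p, T (Fin.castLE hpn j) (Fin.castLE hpn j)) *
      ((ctrbRows A b).compound p κ (Fin.castLEOrderEmb hpn) *
        (ctrbRows A b).compound p ρ (Fin.castLEOrderEmb hpn)) := by
  classical
  have h := compound_ctrbRows_sign hbal hk hTs hTA hTb hTT hTσ hp1 hpk hpn
    (w := Pi.single (Fin.castLEOrderEmb hpn) 1) (fun I => ?_) (by simp) κ ρ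
  · rw [compound_mulVec_single_of_leading hpn
      fun i j hj hij => signature_apply_of_ne hbal hk hTσ (hj.trans_le hpk) hij] at h
    rw [dotProduct_smul, dotProduct_single_one, dotProduct_single_one, smul_eq_mul] at h
    linarith
  · by_cases h : I = Fin.castLEOrderEmb hpn
    · rw [h]
    · simp [h]

theorem signature_apply_self (hbal : IsBalancedRealization A b c σ) {k : ℕ}
    (hk : HankelStrictlyKPositive (fun t => c ⬝ᵥ (A ^ t).mulVec b) k)
    {T : Matrix (Fin n) (Fin n) ℝ} (hTs : T.IsSymm)
    (hTA : T * A = Aᵀ * T) (hTb : T *ᵥ b = c) (hTT : T * T = 1)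
    (hTσ : T * diagonal σ = diagonal σ * T) {j : Fin n} (hj : (j : ℕ) < k) : T j j = 1 := by
  have hprod {p : ℕ} (hpk : p ≤ k) (hpn : p ≤ n) :
      0 < ∏ j : Fin p, T (Fin.castLE hpn j) (Fin.castLE hpn j) := by
    rcases Nat.eq_zero_or_pos p with rfl | hp
    · simp
    · exact pos_of_mul_pos_left (compound_ctrbRows_leading_sign hbal hk hTs hTA hTb hTT hTσ hp hpk
        hpn (Fin.valOrderEmb p) (Fin.valOrderEmb p)) (mul_self_nonneg _)
  have hpos : 0 < T j j := by
    have h := hprod (p := j + 1) hj j.2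
    rw [Fin.prod_univ_castSucc] at h
    exact pos_of_mul_pos_right h (hprod hj.le j.2.le).le
  have hsq : T j j * T j j = 1 := by
    have h := congrFun (congrFun hTT j) j
    rw [mul_apply, one_apply_eq, Finset.sum_eq_single j] at h
    · exact h
    · intro i _ hi
      rw [signature_apply_of_ne hbal hk hTσ hj hi, mul_zero]
    · simp
  nlinarith

/-- The leading block of a sufficiently positive balanced realization is sign symmetric, with
positive definite state matrix. -/
theorem leading_block_symm_posDef (hbal : IsBalancedRealization A b c σ) {k : ℕ}
    (hk : HankelStrictlyKPositive (fun t => c ⬝ᵥ (A ^ t).mulVec b) k) {r : ℕ} (hrk : r ≤ k)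
    (hrn : r ≤ n) :
    (∀ i j : Fin r, A (Fin.castLE hrn i) (Fin.castLE hrn j) =
      A (Fin.castLE hrn j) (Fin.castLE hrn i)) ∧
    (∀ i : Fin r, b (Fin.castLE hrn i) = c (Fin.castLE hrn i)) ∧
    (A.submatrix (Fin.castLE hrn) (Fin.castLE hrn)).PosDef := by
  classical
  obtain ⟨T, hTs, hTA, hTb, hTT, hTσ⟩ := exists_signature hbal
  have hcol {i j : Fin n} (hj : (j : ℕ) < k) : T i j = if i = j then 1 else 0 := by
    split_ifs with hij
    · rw [hij, signature_apply_self hbal hk hTs hTA hTb hTT hTσ hj]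
    · exact signature_apply_of_ne hbal hk hTσ hj hij
  have hrow {i j : Fin n} (hi : (i : ℕ) < k) : T i j = if i = j then 1 else 0 := by
    rw [← hTs.apply, hcol hi]
    simp only [eq_comm]
  have hlt (i : Fin r) : (Fin.castLE hrn i : ℕ) < k := i.2.trans_le hrk
  have hsymm (i j : Fin r) : A (Fin.castLE hrn i) (Fin.castLE hrn j) =
      A (Fin.castLE hrn j) (Fin.castLE hrn i) := by
    have h := congrFun (congrFun hTA (Fin.castLE hrn i)) (Fin.castLE hrn j)
    simpa [mul_apply, hrow (hlt i), hcol (hlt j)] using h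
  refine ⟨hsymm, fun i => ?_, posDef_of_leading_minors_pos _ ?_ fun p hp => ?_⟩
  · have h := congrFun hTb (Fin.castLE hrn i)
    simpa [mulVec, dotProduct, hrow (hlt i)] using h
  · ext i j
    exact hsymm j i
  rcases Nat.eq_zero_or_pos p with rfl | hp1
  · simp
  have hpn := hp.trans hrn
  set e : Fin p ↪o Fin n := Fin.castLEOrderEmb hpn
  set a : (Fin p ↪o ℕ) → ℝ := fun ρ => (ctrbRows A b).compound p ρ e
  have ha (κ ρ : Fin p ↪o ℕ) : 0 < a κ * a ρ := by
    have h := compound_ctrbRows_leading_sign hbal hk hTs hTA hTb hTT hTσ hp1 (hp.trans hrk) hpn κ ρ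
    rwa [Finset.prod_eq_one fun j _ => signature_apply_self hbal hk hTs hTA hTb hTT hTσ
      (j.2.trans_le (hp.trans hrk)), one_mul] at h
  obtain ⟨hspec, -, -, -, hσ, hc, -⟩ := hbal
  have hA := A.tendsto_pow_of_spectrum_norm_lt_one hspec
  let s : (Fin p ↪o ℕ) → (Fin p ↪o ℕ) := fun ρ =>
    OrderEmbedding.ofStrictMono (fun j => ρ j + 1) fun _ _ h => Nat.succ_lt_succ (ρ.strictMono h)
  let Y : Matrix ℕ (Fin n) ℝ := Matrix.of fun i => (A ^ (i + 1)) *ᵥ b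
  have hlim : Filter.Tendsto (fun N => ∑ i ∈ Finset.range N, vecMulVec (Y i) (ctrbRows A b i))
      Filter.atTop (nhds (A * diagonal σ)) := by
    have hcont : Continuous fun M : Matrix (Fin n) (Fin n) ℝ => A * M := by fun_prop
    refine ((hcont.tendsto _).comp (tendsto_sum_vecMulVec_of_stein hA hc)).congr fun N => ?_
    rw [Function.comp_apply, Finset.mul_sum]
    refine Finset.sum_congr rfl fun i _ => ?_
    rw [mul_vecMulVec, mulVec_mulVec, ← pow_succ']
    rfl
  have hdet := tendsto_sum_compound_mul_compound hlim p e e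
  rw [compound_mul, compound_diagonal, mul_diagonal] at hdet
  refine pos_of_mul_pos_left (b := ∏ j, σ (e j)) ?_ (Finset.prod_nonneg fun j _ => (hσ _).le)
  obtain ⟨N₀, hN₀⟩ := exists_mem_boundedTuples (Fin.valOrderEmb p)
  refine (ha (s (Fin.valOrderEmb p)) (Fin.valOrderEmb p)).trans_le (ge_of_tendsto hdet ?_)
  filter_upwards [Filter.eventually_ge_atTop N₀] with N hN
  exact Finset.single_le_sum (f := fun ρ => a (s ρ) * a ρ) (fun ρ _ => (ha _ _).le)
    (boundedTuples_mono p hN hN₀)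

end BalancedMinors

section Stein

variable {n : ℕ} {A : Matrix (Fin n) (Fin n) ℝ} {b c σ x : Fin n → ℝ} {lam : ℝ} {r : ℕ}

theorem eigenvalue_sq_lt_one (hA : Filter.Tendsto (fun N => A ^ N) Filter.atTop (nhds 0))
    (hx : Aᵀ *ᵥ x = lam • x) (hx0 : x ≠ 0) : lam ^ 2 < 1 := by
  obtain ⟨i, hi⟩ := Function.ne_iff.1 hx0
  have hpow (N : ℕ) : (Aᵀ ^ N) *ᵥ x = lam ^ N • x := by
    induction N with
    | zero => simp
    | succ N ih => rw [pow_succ, ← mulVec_mulVec, hx, mulVec_smul, ih, smul_smul, pow_succ']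
  have hcont : Continuous fun M : Matrix (Fin n) (Fin n) ℝ => (Mᵀ *ᵥ x) i / x i := by fun_prop
  have h := (hcont.tendsto 0).comp hA
  have h' : Filter.Tendsto (fun N => lam ^ N) Filter.atTop (nhds 0) := by
    simpa [Function.comp_def, transpose_pow, hpow, mul_div_cancel_right₀ _ hi] using h
  rw [sq_lt_one_iff_abs_lt_one]
  exact tendsto_pow_atTop_nhds_zero_iff.1 h'

theorem stein_mulVec (hS : A * diagonal σ * Aᵀ - diagonal σ + vecMulVec b b = 0) (x : Fin n → ℝ) :
    A *ᵥ (σ * Aᵀ *ᵥ x) + (b ⬝ᵥ x) • b = σ * x := by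
  have hdiag (y : Fin n → ℝ) : diagonal σ *ᵥ y = σ * y := by
    ext i
    rw [mulVec_diagonal, Pi.mul_apply]
  have h := congrArg (fun M => M *ᵥ x) hS
  simp only [add_mulVec, sub_mulVec, zero_mulVec, ← mulVec_mulVec, hdiag, vecMulVec_mulVec] at h
  rw [← sub_eq_zero, ← h]
  ext i
  simp only [Pi.add_apply, Pi.sub_apply, Pi.smul_apply, smul_eq_mul, MulOpposite.smul_eq_mul_unop,
    MulOpposite.unop_op]
  ring

theorem stein_quadratic (hS : A * diagonal σ * Aᵀ - diagonal σ + vecMulVec b b = 0)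
    (x : Fin n → ℝ) :
    ∑ i, σ i * (Aᵀ *ᵥ x) i ^ 2 + (b ⬝ᵥ x) ^ 2 = ∑ i, σ i * x i ^ 2 := by
  have h := congrArg (fun y => x ⬝ᵥ y) (stein_mulVec hS x)
  simp only [dotProduct_add, dotProduct_smul, smul_eq_mul] at h
  rw [dotProduct_mulVec, ← mulVec_transpose, dotProduct_comm x b] at h
  simp only [dotProduct, Pi.mul_apply] at h ⊢
  calc _ = ∑ i, (Aᵀ *ᵥ x) i * (σ i * (Aᵀ *ᵥ x) i) + (∑ i, b i * x i) * ∑ i, b i * x i := by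
        rw [sq (∑ i, b i * x i)]
        congr 1
        exact Finset.sum_congr rfl fun i _ => by ring
    _ = _ := h
    _ = _ := Finset.sum_congr rfl fun i _ => by ring

theorem truncated_eigenvalue_sq_lt_one
    (hA : Filter.Tendsto (fun N => A ^ N) Filter.atTop (nhds 0)) (hσ : ∀ i, 0 < σ i)
    (hS : A * diagonal σ * Aᵀ - diagonal σ + vecMulVec b b = 0)
    (hx : ∀ i : Fin n, (i : ℕ) < r → (Aᵀ *ᵥ x) i = lam * x i)
    (hxr : ∀ i : Fin n, r ≤ (i : ℕ) → x i = 0) (hx0 : x ≠ 0) : lam ^ 2 < 1 := by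
  by_contra! hlam
  have hterm (i : Fin n) : 0 ≤ σ i * (Aᵀ *ᵥ x) i ^ 2 - σ i * x i ^ 2 := by
    rcases lt_or_ge (i : ℕ) r with hi | hi
    · rw [hx i hi]
      have := mul_nonneg (mul_nonneg (hσ i).le (sq_nonneg (x i))) (sub_nonneg.2 hlam)
      linarith
    · rw [hxr i hi]
      have := mul_nonneg (hσ i).le (sq_nonneg ((Aᵀ *ᵥ x) i))
      linarith
  have hsum : ∑ i, (σ i * (Aᵀ *ᵥ x) i ^ 2 - σ i * x i ^ 2) = 0 := by
    refine le_antisymm ?_ (Finset.sum_nonneg fun i _ => hterm i)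
    rw [Finset.sum_sub_distrib]
    linarith [stein_quadratic hS x, sq_nonneg (b ⬝ᵥ x)]
  have hz := (Finset.sum_eq_zero_iff_of_nonneg fun i _ => hterm i).1 hsum
  refine hlam.not_gt (eigenvalue_sq_lt_one hA (funext fun i => ?_) hx0)
  rcases lt_or_ge (i : ℕ) r with hi | hi
  · exact hx i hi
  · have h := hz i (Finset.mem_univ i)
    rw [hxr i hi, zero_pow two_ne_zero, mul_zero, sub_zero] at h
    rw [pow_eq_zero_iff two_ne_zero |>.1 ((mul_eq_zero.1 h).resolve_left (hσ i).ne'),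
      Pi.smul_apply, hxr i hi, smul_zero]

/-- A left eigenvector of a balanced truncation with a gap in the singular values is not
orthogonal to the input vector. -/
theorem truncated_eigenvector_dotProduct_ne_zero
    (hA : Filter.Tendsto (fun N => A ^ N) Filter.atTop (nhds 0)) (hσ : ∀ i, 0 < σ i)
    (hc : A * diagonal σ * Aᵀ - diagonal σ + vecMulVec b b = 0)
    (ho : Aᵀ * diagonal σ * A - diagonal σ + vecMulVec c c = 0)
    {s : ℝ} (hs : ∀ i : Fin n, (i : ℕ) < r → s ≤ σ i) (hs0 : 0 < s)
    (hsr : ∀ i : Fin n, r ≤ (i : ℕ) → σ i < s)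
    (hx : ∀ i : Fin n, (i : ℕ) < r → (Aᵀ *ᵥ x) i = lam * x i)
    (hxr : ∀ i : Fin n, r ≤ (i : ℕ) → x i = 0) (hx0 : x ≠ 0) : b ⬝ᵥ x ≠ 0 := by
  intro hbx
  have hlam := truncated_eigenvalue_sq_lt_one hA hσ hc hx hxr hx0
  set u := Aᵀ *ᵥ x with hu
  have h1 : ∑ i, σ i * u i ^ 2 = ∑ i, σ i * x i ^ 2 := by
    have := stein_quadratic hc x
    rwa [hbx, zero_pow two_ne_zero, add_zero] at this
  have hz : A *ᵥ (σ * u) = σ * x := by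
    have := stein_mulVec hc x
    rwa [hbx, zero_smul, add_zero] at this
  have h2 : ∑ i, σ i * (σ i * x i) ^ 2 ≤ ∑ i, σ i * (σ i * u i) ^ 2 := by
    have := stein_quadratic (A := Aᵀ) (b := c) (σ := σ) (by rwa [transpose_transpose]) (σ * u)
    rw [transpose_transpose, hz] at this
    simp only [Pi.mul_apply] at this
    linarith [sq_nonneg (c ⬝ᵥ (σ * u))]
  have hterm (i : Fin n) : 0 ≤ σ i * (σ i ^ 2 - s ^ 2) * (x i ^ 2 - u i ^ 2) := by
    rcases lt_or_ge (i : ℕ) r with hi | hi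
    · refine mul_nonneg (mul_nonneg (hσ i).le ?_) ?_
      · exact sub_nonneg.2 (pow_le_pow_left₀ hs0.le (hs i hi) 2)
      · rw [hx i hi]
        nlinarith [sq_nonneg (x i)]
    · rw [hxr i hi]
      have h := pow_lt_pow_left₀ (hsr i hi) (hσ i).le two_ne_zero
      have := mul_nonneg (mul_nonneg (hσ i).le (sub_nonneg.2 h.le)) (sq_nonneg (u i))
      linarith
  have hsum : ∑ i, σ i * (σ i ^ 2 - s ^ 2) * (x i ^ 2 - u i ^ 2) = 0 := by
    refine le_antisymm ?_ (Finset.sum_nonneg fun i _ => hterm i)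
    have : ∑ i, σ i * (σ i ^ 2 - s ^ 2) * (x i ^ 2 - u i ^ 2) =
        (∑ i, σ i * (σ i * x i) ^ 2 - ∑ i, σ i * (σ i * u i) ^ 2) -
          s ^ 2 * (∑ i, σ i * x i ^ 2 - ∑ i, σ i * u i ^ 2) := by
      rw [← Finset.sum_sub_distrib, ← Finset.sum_sub_distrib, Finset.mul_sum,
        ← Finset.sum_sub_distrib]
      exact Finset.sum_congr rfl fun i _ => by ring
    rw [this, h1]
    linarith
  have hzero := (Finset.sum_eq_zero_iff_of_nonneg fun i _ => hterm i).1 hsum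
  have hux (i : Fin n) : u i = lam * x i := by
    rcases lt_or_ge (i : ℕ) r with hi | hi
    · exact hx i hi
    · have h := hzero i (Finset.mem_univ i)
      have hlt := pow_lt_pow_left₀ (hsr i hi) (hσ i).le two_ne_zero
      have h' := (mul_eq_zero.1 h).resolve_left (mul_ne_zero (hσ i).ne' (sub_neg.2 hlt).ne)
      rw [hxr i hi] at h' ⊢
      rw [mul_zero]
      exact pow_eq_zero_iff two_ne_zero |>.1 (by linarith)
  have hpos : 0 < ∑ i, σ i * x i ^ 2 := by
    obtain ⟨i, hi⟩ := Function.ne_iff.1 hx0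
    exact Finset.sum_pos' (fun i _ => mul_nonneg (hσ i).le (sq_nonneg _))
      ⟨i, Finset.mem_univ i, mul_pos (hσ i) (pow_two_pos_of_ne_zero hi)⟩
  have hmul : ∑ i, σ i * u i ^ 2 = lam ^ 2 * ∑ i, σ i * x i ^ 2 := by
    rw [Finset.mul_sum]
    exact Finset.sum_congr rfl fun i _ => by rw [hux]; ring
  nlinarith

end Stein

theorem exists_extend_eigenvector {n r : ℕ} {A : Matrix (Fin n) (Fin n) ℝ} (b : Fin n → ℝ)
    (hrn : r ≤ n) (hsymm : (A.submatrix (Fin.castLE hrn) (Fin.castLE hrn)).IsSymm)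
    {y : Fin r → ℝ} {lam : ℝ} (hy0 : y ≠ 0)
    (hy : A.submatrix (Fin.castLE hrn) (Fin.castLE hrn) *ᵥ y = lam • y) :
    ∃ x : Fin n → ℝ, x ≠ 0 ∧ (∀ i : Fin n, (i : ℕ) < r → (Aᵀ *ᵥ x) i = lam * x i) ∧
      (∀ i : Fin n, r ≤ (i : ℕ) → x i = 0) ∧ b ⬝ᵥ x = (b ∘ Fin.castLE hrn) ⬝ᵥ y := by
  let x : Fin n → ℝ := fun i => if h : (i : ℕ) < r then y ⟨i, h⟩ else 0
  have hxy (j : Fin r) : x (Fin.castLE hrn j) = y j := dif_pos j.2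
  have hxr (i : Fin n) (hi : r ≤ (i : ℕ)) : x i = 0 := dif_neg hi.not_gt
  have hdot (f : Fin n → ℝ) : f ⬝ᵥ x = (f ∘ Fin.castLE hrn) ⬝ᵥ y := by
    refine (Fintype.sum_of_injective (Fin.castLE hrn) (Fin.castLE_injective hrn) _ _
      (fun i hi => ?_) fun j => ?_).symm
    · rw [hxr i (not_lt.1 fun h => hi ⟨⟨i, h⟩, rfl⟩), mul_zero]
    · rw [hxy, Function.comp_apply]
  refine ⟨x, fun h => hy0 (funext fun j => ?_), fun i hi => ?_, hxr, hdot b⟩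
  · rw [← hxy, h]
    rfl
  · have h := congrFun hy ⟨i, hi⟩
    rw [← hsymm.eq, Pi.smul_apply, smul_eq_mul, ← hxy] at h
    rw [mulVec, hdot]
    exact h

theorem exists_combination_dotProduct_eq_zero {r : ℕ} (b : Fin r → ℝ) {u v : Fin r → ℝ}
    (huv : LinearIndependent ℝ ![u, v]) :
    ∃ s t : ℝ, s • u + t • v ≠ 0 ∧ b ⬝ᵥ (s • u + t • v) = 0 := by
  rw [LinearIndependent.pair_iff] at huv
  by_cases h : b ⬝ᵥ u = 0
  · refine ⟨1, 0, fun h0 => one_ne_zero (huv 1 0 h0).1, ?_⟩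
    simp [h]
  · refine ⟨b ⬝ᵥ v, -(b ⬝ᵥ u), fun h0 => h (neg_eq_zero.1 (huv _ _ h0).2), ?_⟩
    simp only [dotProduct_add, dotProduct_smul, smul_eq_mul]
    ring

/-- If `(A,b,c)` is a balanced realization of `g(t) = cA^{t-1}b` whose Hankel
matrix is strictly `k`-positive with `2 ≤ k ≤ n`, then for every `1 ≤ r ≤ k-1`
the balanced truncation `(A₁₁, b₁, c₁)` of order `r` satisfies: `A₁₁` is
symmetric, `b₁ = c₁ᵀ`, and `A₁₁` has `r` distinct real eigenvalues, all in the
open interval `(0,1)`. -/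
theorem balanced_truncation_symmetric_positive_spectrum
    {n : ℕ} (A : Matrix (Fin n) (Fin n) ℝ) (b c : Fin n → ℝ) (σ : Fin n → ℝ)
    (hbal : IsBalancedRealization A b c σ)
    (k : ℕ) (hk2 : 2 ≤ k) (hkn : k ≤ n)
    (hkpos : HankelStrictlyKPositive (fun t => c ⬝ᵥ (A ^ t).mulVec b) k)
    (r : ℕ) (hr1 : 1 ≤ r) (hrk : r ≤ k - 1) (hrn : r ≤ n) :
    (A.submatrix (Fin.castLE hrn) (Fin.castLE hrn)).IsSymm ∧
    b ∘ Fin.castLE hrn = c ∘ Fin.castLE hrn ∧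
    ∃ μ : Fin r → ℝ, Function.Injective μ ∧ (∀ i, 0 < μ i ∧ μ i < 1) ∧
      (A.submatrix (Fin.castLE hrn) (Fin.castLE hrn)).charpoly =
        ∏ i, (X - C (μ i)) := by
  obtain ⟨hsymm, hbc, hpd⟩ := leading_block_symm_posDef hbal hkpos (r := r) (by omega) hrn
  have hA := A.tendsto_pow_of_spectrum_norm_lt_one hbal.1
  have hAs : (A.submatrix (Fin.castLE hrn) (Fin.castLE hrn)).IsSymm := by
    ext i j
    exact hsymm j i
  have hσ := hbal.2.2.2.2.1
  have hc := hbal.2.2.2.2.2.1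
  have hmono := hbal.2.2.2.1
  set V := hpd.1.eigenvectorBasis
  have hV (i : Fin r) : (V i : Fin r → ℝ) ≠ 0 := fun h =>
    V.orthonormal.ne_zero i (WithLp.ofLp_injective 2 h)
  refine ⟨hAs, funext hbc, hpd.1.eigenvalues, fun i j hij => ?_,
    fun i => ⟨hpd.eigenvalues_pos i, ?_⟩, hpd.1.charpoly_eq⟩
  · by_contra hne
    have hlin : LinearIndependent ℝ ![(V i : Fin r → ℝ), (V j : Fin r → ℝ)] := by
      rw [LinearIndependent.pair_iff]
      intro s t hst
      exact (LinearIndepOn.pair_iff V hne).1 (V.orthonormal.linearIndependent.linearIndepOn {i, j})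
        s t (WithLp.ofLp_injective 2 hst)
    obtain ⟨s, t, hne0, hdot⟩ :=
      exists_combination_dotProduct_eq_zero (b ∘ Fin.castLE hrn) hlin
    obtain ⟨x, hx0, hx, hxr, hbx⟩ := exists_extend_eigenvector (lam := hpd.1.eigenvalues i) b hrn
      hAs hne0 (by
        rw [mulVec_add, mulVec_smul, mulVec_smul, hpd.1.mulVec_eigenvectorBasis,
          hpd.1.mulVec_eigenvectorBasis, ← hij, smul_add, smul_comm s, smul_comm t])
    refine truncated_eigenvector_dotProduct_ne_zero hA hσ hc hbal.2.2.2.2.2.2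
      (s := σ ⟨r - 1, by omega⟩) (fun l hl => hmono _ _ ?_) (hσ _) (fun l hl => ?_) hx hxr hx0
      (hbx.trans hdot)
    · exact Fin.le_def.2 (Nat.le_sub_one_of_lt hl)
    · refine singularValue_strictAnti_leading hbal hkpos (i := ⟨r - 1, by omega⟩) ?_ ?_
      · simp only
        omega
      · rw [Fin.lt_def]
        simp only
        omega
  · obtain ⟨x, hx0, hx, hxr, -⟩ := exists_extend_eigenvector b hrn hAs (hV i)
      (hpd.1.mulVec_eigenvectorBasis i)
    have h := truncated_eigenvalue_sq_lt_one hA hσ hc hx hxr hx0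
    exact (abs_lt.1 (sq_lt_one_iff_abs_lt_one _ |>.1 h)).2
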